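/- Let ε > 0, let H be a 3-uniform hypergraph, and let X, Y, Z be pairwise disjoint subsets of V(H) with |X| ≥ 2/ε. If d(X,X,Y) ≤ ε²/8 and d(X,X,Z) ≤ ε²/8, then either d(X,Y,Z) ≤ ε, or H contains at least (ε²/16)·|X|²·|Y|·|Z| induced copies of D₂. -/

import Mathlib

open Finset

/-- The number of induced copies of `D₂` (4 vertices spanning exactly 2 edges). -/
def inducedD2Count {V : Type} [Fintype V] [DecidableEq V] (E : Finset (Finset V)) : ℕ :=
  (((Finset.univ : Finset V).powersetCard 4).filter
    (fun S => (E.filter (fun e => e ⊆ S)).card = 2)).card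

/-- `e(X,Y,Z)`: the number of edges with one vertex in each of `X`, `Y`, `Z`. -/
def eXYZ {V : Type} [DecidableEq V] (E : Finset (Finset V)) (X Y Z : Finset V) : ℕ :=
  (E.filter (fun e => (e ∩ X).card = 1 ∧ (e ∩ Y).card = 1 ∧ (e ∩ Z).card = 1)).card

/-- `d(X,Y,Z) = e(X,Y,Z) / (|X||Y||Z|)`. -/
noncomputable def dXYZ {V : Type} [DecidableEq V] (E : Finset (Finset V))
    (X Y Z : Finset V) : ℝ :=
  (eXYZ E X Y Z : ℝ) / ((X.card : ℝ) * (Y.card : ℝ) * (Z.card : ℝ))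

/-- `e(X,X,Y)`: the number of edges with two vertices in `X` and one vertex in `Y`. -/
def eXXY {V : Type} [DecidableEq V] (E : Finset (Finset V)) (X Y : Finset V) : ℕ :=
  (E.filter (fun e => (e ∩ X).card = 2 ∧ (e ∩ Y).card = 1)).card

/-- `d(X,X,Y) = e(X,X,Y) / (C(|X|,2)·|Y|)`. -/
noncomputable def dXXY {V : Type} [DecidableEq V] (E : Finset (Finset V))
    (X Y : Finset V) : ℝ :=
  (eXXY E X Y : ℝ) / ((X.card.choose 2 : ℝ) * (Y.card : ℝ))

theorem aux_edges {V : Type} [DecidableEq V]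
    (E : Finset (Finset V)) (hE : ∀ e ∈ E, e.card = 3) (X Y Z : Finset V)
    (hXY : Disjoint X Y) (hXZ : Disjoint X Z) (hYZ : Disjoint Y Z) :
    eXYZ E X Y Z ≤
      ∑ q ∈ Y ×ˢ Z, (X.filter (fun x => ({x, q.1, q.2} : Finset V) ∈ E)).card := by
  rw [← Finset.card_sigma]
  refine le_trans (Finset.card_le_card ?_) (Finset.card_image_le
    (f := fun a : (Σ _ : V × V, V) => ({a.2, a.1.1, a.1.2} : Finset V)))
  intro e he
  simp only [Finset.mem_filter] at he
  obtain ⟨he, hx, hy, hz⟩ := he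
  obtain ⟨x, hx⟩ := Finset.card_eq_one.1 hx
  obtain ⟨y, hy⟩ := Finset.card_eq_one.1 hy
  obtain ⟨z, hz⟩ := Finset.card_eq_one.1 hz
  have hx' : x ∈ e ∩ X := by rw [hx]; simp
  have hy' : y ∈ e ∩ Y := by rw [hy]; simp
  have hz' : z ∈ e ∩ Z := by rw [hz]; simp
  rw [Finset.mem_inter] at hx' hy' hz'
  have hxy : x ≠ y := fun h => Finset.disjoint_left.1 hXY hx'.2 (h ▸ hy'.2)
  have hxz : x ≠ z := fun h => Finset.disjoint_left.1 hXZ hx'.2 (h ▸ hz'.2)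
  have hyz : y ≠ z := fun h => Finset.disjoint_left.1 hYZ hy'.2 (h ▸ hz'.2)
  have heq : ({x, y, z} : Finset V) = e := by
    apply Finset.eq_of_subset_of_card_le
    · intro w hw
      simp only [Finset.mem_insert, Finset.mem_singleton] at hw
      rcases hw with rfl | rfl | rfl
      exacts [hx'.1, hy'.1, hz'.1]
    · rw [hE e he, Finset.card_eq_three.2 ⟨x, y, z, hxy, hxz, hyz, rfl⟩]
  simp only [Finset.mem_image, Finset.mem_sigma, Finset.mem_product, Finset.mem_filter]
  exact ⟨⟨(y, z), x⟩, ⟨⟨hy'.2, hz'.2⟩, hx'.2, by rw [heq]; exact he⟩, heq⟩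

theorem aux_two {V : Type} [DecidableEq V]
    (E : Finset (Finset V)) (hE : ∀ e ∈ E, e.card = 3) (a b y z : V)
    (hab : a ≠ b) (hay : a ≠ y) (haz : a ≠ z) (hby : b ≠ y) (hbz : b ≠ z) (hyz : y ≠ z)
    (h1 : ({a, y, z} : Finset V) ∈ E) (h2 : ({b, y, z} : Finset V) ∈ E)
    (h3 : ({y, a, b} : Finset V) ∉ E) (h4 : ({z, a, b} : Finset V) ∉ E) :
    (E.filter (fun e => e ⊆ ({y, z, a, b} : Finset V))).card = 2 := by
  have hS : ({y, z, a, b} : Finset V).card = 4 := by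
    rw [Finset.card_insert_of_notMem, Finset.card_eq_three.2 ⟨z, a, b, haz.symm, hbz.symm, hab, rfl⟩]
    simp [hyz, hay.symm, hby.symm]
  rw [Finset.card_eq_two]
  refine ⟨{a, y, z}, {b, y, z}, ?_, ?_⟩
  · intro h
    have : a ∈ ({b, y, z} : Finset V) := by rw [← h]; simp
    simp [hab, hay, haz] at this
  · ext e
    simp only [Finset.mem_filter, Finset.mem_insert, Finset.mem_singleton]
    constructor
    · rintro ⟨he, hs⟩
      have hc : (({y, z, a, b} : Finset V) \ e).card = 1 := by
        rw [Finset.card_sdiff_of_subset hs, hS, hE e he]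
      obtain ⟨v, hv⟩ := Finset.card_eq_one.1 hc
      have hm : ∀ w, w ∈ e ↔ (w = y ∨ w = z ∨ w = a ∨ w = b) ∧ w ≠ v := by
        intro w
        have h5 := Finset.ext_iff.1 hv w
        have h6 := @hs w
        simp only [Finset.mem_sdiff, Finset.mem_insert, Finset.mem_singleton] at h5 h6
        clear hv hs hc h1 h2 h3 h4 hS hab hay haz hby hbz hyz
        by_cases w ∈ e <;> by_cases w = v <;> simp_all
      have hvS : v = y ∨ v = z ∨ v = a ∨ v = b := by
        have h5 := (Finset.ext_iff.1 hv v).2 (by simp)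
        simpa using (Finset.mem_sdiff.1 h5).1
      rcases hvS with rfl | rfl | rfl | rfl
      · exfalso; apply h4; convert he; ext w; rw [hm]; simp; grind
      · exfalso; apply h3; convert he; ext w; rw [hm]; simp; grind
      · right; ext w; rw [hm]; simp; grind
      · left; ext w; rw [hm]; simp; grind
    · rintro (rfl | rfl)
      · exact ⟨h1, by intro w; simp only [Finset.mem_insert, Finset.mem_singleton]; grind⟩
      · exact ⟨h2, by intro w; simp only [Finset.mem_insert, Finset.mem_singleton]; grind⟩

theorem aux_inter {V : Type} [DecidableEq V] (X Y Z : Finset V)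
    (hXY : Disjoint X Y) (hXZ : Disjoint X Z) (hYZ : Disjoint Y Z)
    (p : Finset V) (hp : p ⊆ X) (y z : V) (hy : y ∈ Y) (hz : z ∈ Z) :
    (insert y p) ∩ X = p ∧ (insert y p) ∩ Y = {y} ∧
    (insert y (insert z p)) ∩ X = p ∧ (insert y (insert z p)) ∩ Y = {y} ∧
    (insert y (insert z p)) ∩ Z = {z} := by
  rw [Finset.disjoint_left] at hXY hXZ hYZ
  refine ⟨?_, ?_, ?_, ?_, ?_⟩ <;> ext w <;>
    simp only [Finset.mem_inter, Finset.mem_insert, Finset.mem_singleton] <;>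
    have := @hp w <;> have := @hXY w <;> have := @hXZ w <;> have := @hYZ w <;> grind

/-- triples y, z, p with p a pair in the neighbourhood. -/
def quads {V : Type} [DecidableEq V] (E : Finset (Finset V)) (X Y Z : Finset V) :
    Finset (Σ _ : V × V, Finset V) :=
  (Y ×ˢ Z).sigma (fun q =>
    (X.filter (fun x => ({x, q.1, q.2} : Finset V) ∈ E)).powersetCard 2)

theorem mem_quads {V : Type} [DecidableEq V] (E : Finset (Finset V)) (X Y Z : Finset V)
    (y z : V) (p : Finset V) : (⟨(y, z), p⟩ : Σ _ : V × V, Finset V) ∈ quads E X Y Z ↔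
    (y ∈ Y ∧ z ∈ Z) ∧ (p ⊆ X ∧ ∀ x ∈ p, ({x, y, z} : Finset V) ∈ E) ∧ p.card = 2 := by
  simp only [quads, Finset.mem_sigma, Finset.mem_product, Finset.mem_powersetCard,
    Finset.subset_iff, Finset.mem_filter]
  grind

theorem aux_bad1 {V : Type} [DecidableEq V]
    (E : Finset (Finset V)) (X Y Z : Finset V)
    (hXY : Disjoint X Y) (hXZ : Disjoint X Z) (hYZ : Disjoint Y Z) :
    ((quads E X Y Z).filter (fun a => insert a.1.1 a.2 ∈ E)).card ≤ eXXY E X Y * Z.card := by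
  rw [eXXY, ← Finset.card_product]
  apply Finset.card_le_card_of_injOn (fun a => (insert a.1.1 a.2, a.1.2))
  · rintro ⟨⟨y, z⟩, p⟩ h
    simp only [Finset.mem_coe, Finset.mem_filter, mem_quads] at h
    obtain ⟨⟨⟨hy, hz⟩, ⟨hp, -⟩, hc⟩, he⟩ := h
    obtain ⟨i1, i2, -⟩ := aux_inter X Y Z hXY hXZ hYZ p hp y z hy hz
    simp [he, i1, i2, hc, hz]
  · rintro ⟨⟨y, z⟩, p⟩ h ⟨⟨y', z'⟩, p'⟩ h' heq
    simp only [Finset.mem_coe, Finset.mem_filter, mem_quads] at h h'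
    obtain ⟨⟨⟨hy, hz⟩, ⟨hp, -⟩, hc⟩, he⟩ := h
    obtain ⟨⟨⟨hy', hz'⟩, ⟨hp', -⟩, hc'⟩, he'⟩ := h'
    obtain ⟨i1, i2, -⟩ := aux_inter X Y Z hXY hXZ hYZ p hp y z hy hz
    obtain ⟨j1, j2, -⟩ := aux_inter X Y Z hXY hXZ hYZ p' hp' y' z' hy' hz'
    simp only [Prod.mk.injEq] at heq
    obtain ⟨e1, rfl⟩ := heq
    rw [e1, j1] at i1
    rw [e1, j2, Finset.singleton_inj] at i2
    rw [i1, i2]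

theorem aux_bad2 {V : Type} [DecidableEq V]
    (E : Finset (Finset V)) (X Y Z : Finset V)
    (hXY : Disjoint X Y) (hXZ : Disjoint X Z) (hYZ : Disjoint Y Z) :
    ((quads E X Y Z).filter (fun a => insert a.1.2 a.2 ∈ E)).card ≤ eXXY E X Z * Y.card := by
  rw [eXXY, ← Finset.card_product]
  apply Finset.card_le_card_of_injOn (fun a => (insert a.1.2 a.2, a.1.1))
  · rintro ⟨⟨y, z⟩, p⟩ h
    simp only [Finset.mem_coe, Finset.mem_filter, mem_quads] at h
    obtain ⟨⟨⟨hy, hz⟩, ⟨hp, -⟩, hc⟩, he⟩ := h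
    obtain ⟨i1, i2, -⟩ := aux_inter X Z Y hXZ hXY hYZ.symm p hp z y hz hy
    simp [he, i1, i2, hc, hy]
  · rintro ⟨⟨y, z⟩, p⟩ h ⟨⟨y', z'⟩, p'⟩ h' heq
    simp only [Finset.mem_coe, Finset.mem_filter, mem_quads] at h h'
    obtain ⟨⟨⟨hy, hz⟩, ⟨hp, -⟩, hc⟩, he⟩ := h
    obtain ⟨⟨⟨hy', hz'⟩, ⟨hp', -⟩, hc'⟩, he'⟩ := h'
    obtain ⟨i1, i2, -⟩ := aux_inter X Z Y hXZ hXY hYZ.symm p hp z y hz hy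
    obtain ⟨j1, j2, -⟩ := aux_inter X Z Y hXZ hXY hYZ.symm p' hp' z' y' hz' hy'
    simp only [Prod.mk.injEq] at heq
    obtain ⟨e1, rfl⟩ := heq
    rw [e1, j1] at i1
    rw [e1, j2, Finset.singleton_inj] at i2
    rw [i1, i2]

theorem aux_good {V : Type} [Fintype V] [DecidableEq V]
    (E : Finset (Finset V)) (hE : ∀ e ∈ E, e.card = 3) (X Y Z : Finset V)
    (hXY : Disjoint X Y) (hXZ : Disjoint X Z) (hYZ : Disjoint Y Z) :
    ((quads E X Y Z).filter
      (fun a => ¬ (insert a.1.1 a.2 ∈ E ∨ insert a.1.2 a.2 ∈ E))).card ≤ inducedD2Count E := by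
  rw [inducedD2Count]
  apply Finset.card_le_card_of_injOn (fun a => insert a.1.1 (insert a.1.2 a.2))
  · rintro ⟨⟨y, z⟩, p⟩ h
    simp only [Finset.mem_coe, Finset.mem_filter, mem_quads] at h
    obtain ⟨⟨⟨hy, hz⟩, ⟨hp, hN⟩, hc⟩, hn⟩ := h
    push Not at hn
    obtain ⟨a, b, hab, rfl⟩ := Finset.card_eq_two.1 hc
    have ha : a ∈ X := hp (by simp)
    have hb : b ∈ X := hp (by simp)
    have hay : a ≠ y := fun h => Finset.disjoint_left.1 hXY ha (h ▸ hy)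
    have haz : a ≠ z := fun h => Finset.disjoint_left.1 hXZ ha (h ▸ hz)
    have hby : b ≠ y := fun h => Finset.disjoint_left.1 hXY hb (h ▸ hy)
    have hbz : b ≠ z := fun h => Finset.disjoint_left.1 hXZ hb (h ▸ hz)
    have hyz : y ≠ z := fun h => Finset.disjoint_left.1 hYZ hy (h ▸ hz)
    simp only [Finset.mem_coe, Finset.mem_filter, Finset.mem_powersetCard]
    refine ⟨⟨Finset.subset_univ _, ?_⟩, aux_two E hE a b y z hab hay haz hby hbz hyz
      (hN a (by simp)) (hN b (by simp)) hn.1 hn.2⟩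
    rw [Finset.card_insert_of_notMem, Finset.card_eq_three.2 ⟨z, a, b, haz.symm, hbz.symm, hab, rfl⟩]
    simp [hyz, hay.symm, hby.symm]
  · rintro ⟨⟨y, z⟩, p⟩ h ⟨⟨y', z'⟩, p'⟩ h' heq
    simp only [Finset.mem_coe, Finset.mem_filter, mem_quads] at h h'
    obtain ⟨⟨⟨hy, hz⟩, ⟨hp, -⟩, hc⟩, he⟩ := h
    obtain ⟨⟨⟨hy', hz'⟩, ⟨hp', -⟩, hc'⟩, he'⟩ := h'
    obtain ⟨-, -, i1, i2, i3⟩ := aux_inter X Y Z hXY hXZ hYZ p hp y z hy hz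
    obtain ⟨-, -, j1, j2, j3⟩ := aux_inter X Y Z hXY hXZ hYZ p' hp' y' z' hy' hz'
    simp only at heq
    rw [heq, j1] at i1
    rw [heq, j2, Finset.singleton_inj] at i2
    rw [heq, j3, Finset.singleton_inj] at i3
    rw [i1, i2, i3]

theorem aux_total {V : Type} [Fintype V] [DecidableEq V]
    (E : Finset (Finset V)) (hE : ∀ e ∈ E, e.card = 3) (X Y Z : Finset V)
    (hXY : Disjoint X Y) (hXZ : Disjoint X Z) (hYZ : Disjoint Y Z) :
    (quads E X Y Z).card ≤ eXXY E X Y * Z.card + eXXY E X Z * Y.card + inducedD2Count E := by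
  rw [← Finset.card_filter_add_card_filter_not
    (fun a => insert a.1.1 a.2 ∈ E ∨ insert a.1.2 a.2 ∈ E), Finset.filter_or]
  have := Finset.card_union_le ((quads E X Y Z).filter (fun a => insert a.1.1 a.2 ∈ E))
    ((quads E X Y Z).filter (fun a => insert a.1.2 a.2 ∈ E))
  have := aux_bad1 E X Y Z hXY hXZ hYZ
  have := aux_bad2 E X Y Z hXY hXZ hYZ
  have := aux_good E hE X Y Z hXY hXZ hYZ
  omega

theorem aux_lower {V : Type} [DecidableEq V]
    (E : Finset (Finset V)) (hE : ∀ e ∈ E, e.card = 3) (X Y Z : Finset V)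
    (hXY : Disjoint X Y) (hXZ : Disjoint X Z) (hYZ : Disjoint Y Z) (t : ℝ) (ht : 2 ≤ t)
    (h : t * (Y.card * Z.card) ≤ (eXYZ E X Y Z : ℝ)) :
    t ^ 2 / 4 * (Y.card * Z.card) ≤ ((quads E X Y Z).card : ℝ) := by
  have h1 : (eXYZ E X Y Z : ℝ) ≤ _ := Nat.cast_le.2 (aux_edges E hE X Y Z hXY hXZ hYZ)
  push_cast at h1
  rw [quads, Finset.card_sigma]
  simp only [Finset.card_powersetCard]
  push_cast
  simp only [Nat.cast_choose_two]
  set d : V × V → ℝ := fun q => ((X.filter (fun x => ({x, q.1, q.2} : Finset V) ∈ E)).card : ℝ)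
  have h2 : ∑ q ∈ Y ×ˢ Z, ((2 * t - 1) / 2 * d q - t ^ 2 / 2) ≤
      ∑ q ∈ Y ×ˢ Z, d q * (d q - 1) / 2 := by
    apply Finset.sum_le_sum
    intro q _
    nlinarith [sq_nonneg (d q - t)]
  refine le_trans ?_ h2
  rw [Finset.sum_sub_distrib, ← Finset.mul_sum, Finset.sum_const, Finset.card_product,
    nsmul_eq_mul]
  push_cast
  have h3 : t * (Y.card * Z.card) ≤ ∑ q ∈ Y ×ˢ Z, d q := h.trans h1
  have h4 := mul_le_mul_of_nonneg_left h3 (show 0 ≤ (2 * t - 1) / 2 by linarith)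
  have h5 : (0 : ℝ) ≤ Y.card * Z.card := by positivity
  have h6 : 0 ≤ t * (t - 2) * ((Y.card : ℝ) * Z.card) :=
    mul_nonneg (mul_nonneg (by linarith) (by linarith)) h5
  linarith

theorem aux_pair {V : Type} [DecidableEq V]
    (E : Finset (Finset V)) (X Y : Finset V) (c : ℝ) (hc : 0 ≤ c) (hY : 0 < Y.card)
    (hX : 2 ≤ X.card) (h : dXXY E X Y ≤ c) :
    (eXXY E X Y : ℝ) ≤ c * ((X.card : ℝ) ^ 2 / 2 * Y.card) := by
  have h0 : 0 < X.card.choose 2 := Nat.choose_pos hX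
  rw [dXXY, div_le_iff₀ (by positivity)] at h
  refine h.trans ?_
  rw [Nat.cast_choose_two]
  gcongr
  nlinarith [(Nat.cast_nonneg X.card : (0 : ℝ) ≤ X.card)]

theorem pairs_to_triple_sparse {V : Type} [Fintype V] [DecidableEq V]
    (E : Finset (Finset V)) (hE : ∀ e ∈ E, e.card = 3)
    (ε : ℝ) (hε : 0 < ε) (X Y Z : Finset V)
    (hXY : Disjoint X Y) (hXZ : Disjoint X Z) (hYZ : Disjoint Y Z)
    (hX : (X.card : ℝ) ≥ 2 / ε)
    (h1 : dXXY E X Y ≤ ε ^ 2 / 8) (h2 : dXXY E X Z ≤ ε ^ 2 / 8) :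
    dXYZ E X Y Z ≤ ε ∨
    (inducedD2Count E : ℝ) ≥
      ε ^ 2 / 16 * (X.card : ℝ) ^ 2 * (Y.card : ℝ) * (Z.card : ℝ) := by
  by_contra hcon
  push Not at hcon
  obtain ⟨hd, hcnt⟩ := hcon
  have hpos : (0 : ℝ) < (X.card : ℝ) * (Y.card : ℝ) * (Z.card : ℝ) := by
    by_contra hn
    have h0 : (X.card : ℝ) * (Y.card : ℝ) * (Z.card : ℝ) = 0 :=
      le_antisymm (not_lt.1 hn) (by positivity)
    rw [dXYZ, h0, div_zero] at hd
    linarith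
  have hne : X.card ≠ 0 ∧ Y.card ≠ 0 ∧ Z.card ≠ 0 := by
    refine ⟨?_, ?_, ?_⟩ <;> intro h <;> simp [h] at hpos
  have hY := Nat.pos_of_ne_zero hne.2.1
  have hZ := Nat.pos_of_ne_zero hne.2.2
  rw [dXYZ, lt_div_iff₀ hpos] at hd
  have ht : 2 ≤ ε * X.card := by
    rw [ge_iff_le, div_le_iff₀ hε] at hX
    linarith
  have hL := aux_lower E hE X Y Z hXY hXZ hYZ (ε * X.card) ht (by linarith)
  have hX2 : 2 ≤ X.card := by
    by_contra hlt
    have hX1 : X.card = 1 := by have := hne.1; omega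
    have hle : (eXYZ E X Y Z : ℝ) ≤ _ := Nat.cast_le.2 (aux_edges E hE X Y Z hXY hXZ hYZ)
    have hle2 : ∑ q ∈ Y ×ˢ Z, (X.filter (fun x => ({x, q.1, q.2} : Finset V) ∈ E)).card
        ≤ ∑ q ∈ Y ×ˢ Z, 1 :=
      Finset.sum_le_sum (fun q _ => (Finset.card_filter_le _ _).trans hX1.le)
    rw [Finset.sum_const, Finset.card_product, smul_eq_mul, mul_one] at hle2
    have hle3 : (_ : ℝ) ≤ _ := hle.trans (Nat.cast_le.2 hle2)
    push_cast at hle3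
    rw [hX1] at hd ht
    push_cast at hd ht
    have : (0 : ℝ) < Y.card * Z.card := by positivity
    nlinarith
  have p1 := aux_pair E X Y _ (by positivity) hY hX2 h1
  have p2 := aux_pair E X Z _ (by positivity) hZ hX2 h2
  have hT : ((quads E X Y Z).card : ℝ) ≤ _ :=
    Nat.cast_le.2 (aux_total E hE X Y Z hXY hXZ hYZ)
  push_cast at hT
  have p1' := mul_le_mul_of_nonneg_right p1 (Nat.cast_nonneg (α := ℝ) Z.card)
  have p2' := mul_le_mul_of_nonneg_right p2 (Nat.cast_nonneg (α := ℝ) Y.card)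
  have : 0 < ε ^ 2 * ((X.card : ℝ) ^ 2 * Y.card * Z.card) := by
    have := Nat.pos_of_ne_zero hne.1
    positivity
  nlinarith
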